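/- Let n ≥ 2 and in the Laurent polynomial ring L = ℂ[x_1^{±1}, …, x_n^{±1}] set s_i = e_i(x_1 + x_1^{-1}, …, x_n + x_n^{-1}) for i = 1, …, n, and Δ_n^± = (1/2)·(∏_{i=1}^n (x_i + x_i^{-1}) ± ∏_{i=1}^n (x_i - x_i^{-1})), so that s_n = Δ_n^+ + Δ_n^-. Then there exist elements p_0 and p_1 of the ℂ-subalgebra of L generated by s_1, …, s_{n-1} such that Δ_n^+ · Δ_n^- = p_1 + s_n · p_0. -/

import Mathlib

noncomputable section

/-- The Laurent polynomial ring `ℂ[x₁^{±1}, …, xₙ^{±1}]`, realized as the group algebra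
of `ℤⁿ` over `ℂ`. -/
abbrev LaurentAlg (n : ℕ) := AddMonoidAlgebra ℂ (Fin n →₀ ℤ)

/-- The variable `xᵢ`. -/
def Xvar {n : ℕ} (i : Fin n) : LaurentAlg n :=
  AddMonoidAlgebra.single (Finsupp.single i 1) 1

/-- The inverse variable `xᵢ⁻¹`. -/
def Xinv {n : ℕ} (i : Fin n) : LaurentAlg n :=
  AddMonoidAlgebra.single (Finsupp.single i (-1)) 1

/-- `s_k = e_k(x₁ + x₁⁻¹, …, xₙ + xₙ⁻¹)`, the `k`-th elementary symmetric polynomial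
in the elements `xⱼ + xⱼ⁻¹`. -/
def sD {n : ℕ} (k : ℕ) : LaurentAlg n :=
  ∑ t ∈ Finset.powersetCard k Finset.univ, ∏ j ∈ t, (Xvar j + Xinv j)

/-- `Δₙ⁺ = (1/2)(∏ᵢ (xᵢ + xᵢ⁻¹) + ∏ᵢ (xᵢ - xᵢ⁻¹))`. -/
def deltaPlus (n : ℕ) : LaurentAlg n :=
  algebraMap ℂ (LaurentAlg n) (1 / 2) *
    (∏ i : Fin n, (Xvar i + Xinv i) + ∏ i : Fin n, (Xvar i - Xinv i))

/-- `Δₙ⁻ = (1/2)(∏ᵢ (xᵢ + xᵢ⁻¹) - ∏ᵢ (xᵢ - xᵢ⁻¹))`. -/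
def deltaMinus (n : ℕ) : LaurentAlg n :=
  algebraMap ℂ (LaurentAlg n) (1 / 2) *
    (∏ i : Fin n, (Xvar i + Xinv i) - ∏ i : Fin n, (Xvar i - Xinv i))

theorem prod_add_algebraMap_aux (n : ℕ) (hn : 2 ≤ n) (c : ℂ) :
    ∃ A ∈ Algebra.adjoin ℂ (sD (n := n) '' Set.Icc 1 (n - 1)),
      ∏ i : Fin n, ((Xvar i + Xinv i) + algebraMap ℂ (LaurentAlg n) c) = A + sD (n := n) n := by
  have key : ∏ i : Fin n, ((Xvar i + Xinv i) + algebraMap ℂ (LaurentAlg n) c)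
      = ∑ k ∈ Finset.range (n + 1), algebraMap ℂ (LaurentAlg n) (c ^ (n - k)) * sD (n := n) k := by
    rw [Finset.prod_add, Finset.sum_powerset]
    simp only [Finset.card_univ, Fintype.card_fin]
    refine Finset.sum_congr rfl fun k _ => ?_
    rw [sD, Finset.mul_sum]
    refine Finset.sum_congr rfl fun t ht => ?_
    rw [Finset.mem_powersetCard] at ht
    rw [Finset.prod_const, Finset.card_sdiff_of_subset ht.1, ht.2, Finset.card_univ,
      Fintype.card_fin, map_pow, mul_comm]
  rw [Finset.sum_range_succ] at key
  refine ⟨_, ?_, key.trans (by rw [Nat.sub_self, pow_zero, map_one, one_mul])⟩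
  refine Subalgebra.sum_mem _ fun k hk => Subalgebra.mul_mem _ (Subalgebra.algebraMap_mem _ _) ?_
  rw [Finset.mem_range] at hk
  rcases Nat.eq_zero_or_pos k with rfl | h
  · have : sD (n := n) 0 = 1 := by simp [sD]
    rw [this]
    exact Subalgebra.one_mem _
  · exact Algebra.subset_adjoin ⟨k, ⟨h, by omega⟩, rfl⟩

theorem Xvar_mul_Xinv_aux {n : ℕ} (i : Fin n) : Xvar i * Xinv i = 1 := by
  rw [Xvar, Xinv, AddMonoidAlgebra.single_mul_single, ← Finsupp.single_add]
  simp [AddMonoidAlgebra.one_def]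

/-- One has `sₙ = Δₙ⁺ + Δₙ⁻`, and there are elements `p₀, p₁` of the `ℂ`-subalgebra
generated by `s₁, …, s_{n-1}` such that `Δₙ⁺ · Δₙ⁻ = p₁ + sₙ · p₀`. -/
theorem deltaPlus_mul_deltaMinus (n : ℕ) (hn : 2 ≤ n) :
    sD (n := n) n = deltaPlus n + deltaMinus n ∧
    ∃ p₀ p₁ : LaurentAlg n,
      p₀ ∈ Algebra.adjoin ℂ (sD (n := n) '' Set.Icc 1 (n - 1)) ∧
      p₁ ∈ Algebra.adjoin ℂ (sD (n := n) '' Set.Icc 1 (n - 1)) ∧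
      deltaPlus n * deltaMinus n = p₁ + sD (n := n) n * p₀ := by
  have hs : sD (n := n) n = ∏ i : Fin n, (Xvar i + Xinv i) := by
    have := Finset.powersetCard_self (Finset.univ : Finset (Fin n))
    rw [Finset.card_univ, Fintype.card_fin] at this
    rw [sD, this, Finset.sum_singleton]
  have hhalf : algebraMap ℂ (LaurentAlg n) (1 / 2) * 2 = 1 := by
    rw [← map_ofNat (algebraMap ℂ (LaurentAlg n)) 2, ← map_mul, one_div,
      inv_mul_cancel₀ two_ne_zero, map_one]
  obtain ⟨A, hA, hA2⟩ := prod_add_algebraMap_aux n hn 2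
  obtain ⟨B, hB, hB2⟩ := prod_add_algebraMap_aux n hn (-2)
  have hD : (∏ i : Fin n, (Xvar i - Xinv i)) * (∏ i : Fin n, (Xvar i - Xinv i))
      = (A + sD (n := n) n) * (B + sD (n := n) n) := by
    rw [← hA2, ← hB2, ← Finset.prod_mul_distrib, ← Finset.prod_mul_distrib]
    refine Finset.prod_congr rfl fun i _ => ?_
    rw [map_neg, map_ofNat]
    linear_combination (-4 : LaurentAlg n) * Xvar_mul_Xinv_aux i
  refine ⟨?_, algebraMap ℂ _ (-(1 / 2) * (1 / 2)) * (A + B),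
    algebraMap ℂ _ (-(1 / 2) * (1 / 2)) * (A * B),
    Subalgebra.mul_mem _ (Subalgebra.algebraMap_mem _ _) (Subalgebra.add_mem _ hA hB),
    Subalgebra.mul_mem _ (Subalgebra.algebraMap_mem _ _) (Subalgebra.mul_mem _ hA hB), ?_⟩
  · rw [deltaPlus, deltaMinus, ← hs]
    linear_combination (-sD (n := n) n) * hhalf
  · rw [deltaPlus, deltaMinus, ← hs, map_mul, map_neg]
    linear_combination
      (-(algebraMap ℂ (LaurentAlg n) (1 / 2)) * algebraMap ℂ (LaurentAlg n) (1 / 2)) * hD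

end
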